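/- Boundary tangency principle for constant-mean-curvature graphs: Let r > 0, let D⁺ = {x ∈ ℝ² : |x| < r, x₂ ≥ 0} be the closed upper half-disk, and let u, v : D⁺ → ℝ be functions that are C² on D⁺ (i.e., extend C² to a neighborhood), with u ≥ v on D⁺, u(0) = v(0), and ∇u(0) = ∇v(0). Suppose there are real constants H₁ ≤ H₂ with div(∇u/√(1+|∇u|²)) = 2H₁ and div(∇v/√(1+|∇v|²)) = 2H₂ on the interior {x ∈ ℝ² : |x| < r, x₂ > 0}. Then u and v coincide on a neighborhood of the origin in D⁺. -/

import Mathlib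

open Real

/-- The divergence of a vector field on the Euclidean plane. -/
noncomputable def vecDiv (F : EuclideanSpace ℝ (Fin 2) → EuclideanSpace ℝ (Fin 2))
    (x : EuclideanSpace ℝ (Fin 2)) : ℝ :=
  ∑ i, fderiv ℝ F x (EuclideanSpace.single i 1) i

/-- The mean curvature operator `div (∇u / √(1 + |∇u|²))` for a graph. -/
noncomputable def cmcOp (u : EuclideanSpace ℝ (Fin 2) → ℝ)
    (x : EuclideanSpace ℝ (Fin 2)) : ℝ :=
  vecDiv (fun y => (Real.sqrt (1 + ‖gradient u y‖ ^ 2))⁻¹ • gradient u y) x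

/-!
Written in non-divergence form at slope `p = ∇u`, the mean curvature operator has coefficient matrix
`(1 + |p|²) I - p ⊗ p = I + Jp ⊗ Jp`, with `J` the quarter turn, and is therefore elliptic. As the
coefficients are locally Lipschitz in `p`, the difference `w = u - v ≥ 0` satisfies a linear
elliptic inequality `∑ aᵢⱼ ∂ᵢ∂ⱼ w ≤ Λ |∇w|`. If `w` were positive throughout a disk in the half-disk
touching the boundary at the origin, Hopf's boundary point lemma would give it a positive inward
slope there, contradicting `∇u(0) = ∇v(0)`. So `w` has an interior zero, the strong minimum
principle spreads it over the open half-disk, and continuity reaches the flat part of the boundary.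
-/

open Filter Metric Set Topology

section SecondDerivativeTest

theorem deriv_deriv_nonneg_of_isLocalMin {f : ℝ → ℝ} {t : ℝ} (hf : ContinuousAt f t)
    (hmin : IsLocalMin f t) : 0 ≤ deriv (deriv f) t := by
  by_contra! hneg
  have hmax : IsLocalMax f t := isLocalMax_of_deriv_deriv_neg hneg hmin.deriv_eq_zero hf
  have hconst : f =ᶠ[𝓝 t] fun _ ↦ f t := by
    filter_upwards [hmin, hmax] with s hle hge using le_antisymm hge hle
  have hzero : deriv (deriv f) t = 0 := by simpa using hconst.deriv.deriv_eq
  exact hneg.ne hzero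

variable {E F : Type*} [NormedAddCommGroup E] [NormedSpace ℝ E] [NormedAddCommGroup F]
  [NormedSpace ℝ F]

theorem differentiableAt_fderiv_of_contDiffAt_two {f : E → F} {x : E} (hf : ContDiffAt ℝ 2 f x) :
    DifferentiableAt ℝ (fderiv ℝ f) x :=
  (hf.fderiv_right (m := 1) (by norm_num)).differentiableAt one_ne_zero

theorem fderiv_fderiv_sub_of_contDiffAt {f g : E → F} {x : E} (hf : ContDiffAt ℝ 2 f x)
    (hg : ContDiffAt ℝ 2 g x) :
    fderiv ℝ (fderiv ℝ fun y ↦ f y - g y) x =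
      fderiv ℝ (fderiv ℝ f) x - fderiv ℝ (fderiv ℝ g) x := by
  have hsub : fderiv ℝ (fun y ↦ f y - g y) =ᶠ[𝓝 x] fun y ↦ fderiv ℝ f y - fderiv ℝ g y := by
    filter_upwards [hf.eventually (by simp), hg.eventually (by simp)] with y hfy hgy
    exact fderiv_fun_sub (hfy.differentiableAt two_ne_zero) (hgy.differentiableAt two_ne_zero)
  rw [hsub.fderiv_eq]
  exact fderiv_fun_sub (differentiableAt_fderiv_of_contDiffAt_two hf)
    (differentiableAt_fderiv_of_contDiffAt_two hg)

theorem deriv_deriv_comp_line {f : E → F} {x : E} (hf : ContDiffAt ℝ 2 f x) (e : E) :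
    deriv (deriv fun t : ℝ ↦ f (x + t • e)) 0 = fderiv ℝ (fderiv ℝ f) x e e := by
  have hline (t : ℝ) : HasDerivAt (fun t : ℝ ↦ x + t • e) e t := by
    simpa using ((hasDerivAt_id t).smul_const e).const_add x
  have hlim : Tendsto (fun t : ℝ ↦ x + t • e) (𝓝 0) (𝓝 x) := by
    simpa using (hline 0).continuousAt.tendsto
  have hfirst : (deriv fun t : ℝ ↦ f (x + t • e)) =ᶠ[𝓝 0] fun t ↦ fderiv ℝ f (x + t • e) e := by
    filter_upwards [hlim.eventually (hf.eventually (by simp))] with t ht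
    exact ((ht.differentiableAt two_ne_zero).hasFDerivAt.comp_hasDerivAt t (hline t)).deriv
  have hsecond : HasDerivAt (fun t : ℝ ↦ fderiv ℝ f (x + t • e))
      (fderiv ℝ (fderiv ℝ f) x e) 0 :=
    HasFDerivAt.comp_hasDerivAt_of_eq 0
      (differentiableAt_fderiv_of_contDiffAt_two hf).hasFDerivAt (hline 0) (by simp)
  have heval : HasDerivAt (fun t : ℝ ↦ fderiv ℝ f (x + t • e) e)
      (fderiv ℝ (fderiv ℝ f) x e e) 0 := by
    simpa using hsecond.clm_apply (hasDerivAt_const 0 e)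
  rw [hfirst.deriv_eq, heval.deriv]

theorem fderiv_fderiv_apply_self_nonneg_of_isLocalMin {f : E → ℝ} {x : E}
    (hf : ContDiffAt ℝ 2 f x) (hmin : IsLocalMin f x) (e : E) :
    0 ≤ fderiv ℝ (fderiv ℝ f) x e e := by
  have hline : ContinuousAt (fun t : ℝ ↦ x + t • e) 0 := by fun_prop
  have hzero : x + (0 : ℝ) • e = x := by simp
  rw [← deriv_deriv_comp_line hf]
  refine deriv_deriv_nonneg_of_isLocalMin ?_ ?_
  · exact ContinuousAt.comp (g := f) (by rw [hzero]; exact hf.continuousAt) hline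
  · exact IsMinFilter.comp_tendsto (b := (0 : ℝ)) (by rw [hzero]; exact hmin)
      (by simpa [ContinuousAt] using hline)

end SecondDerivativeTest

section EllipticInequalities

variable {E : Type*} [NormedAddCommGroup E] [InnerProductSpace ℝ E] {ι : Type*} [Fintype ι]

/-- The vectors `ξ k` encode a uniformly elliptic coefficient matrix `a = ∑ ξ k ⊗ ξ k`, namely
`|η|² ≤ a(η, η)` for all `η` and `tr a ≤ Λ`; the operator `∑ aᵢⱼ ∂ᵢ∂ⱼ` is then
`w ↦ ∑ D²w(ξ k, ξ k)`. The lower ellipticity constant is normalised to `1`. -/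
structure IsEllipticFrame (Λ : ℝ) (ξ : ι → E) : Prop where
  sq_norm_le (η : E) : ‖η‖ ^ 2 ≤ ∑ k, inner ℝ (ξ k) η ^ 2
  sum_sq_norm_le : ∑ k, ‖ξ k‖ ^ 2 ≤ Λ

/-- `w` satisfies `∑ aᵢⱼ ∂ᵢ∂ⱼ w ≤ Λ |∇w|` at `x` for some elliptic matrix `a`, that is, `w` is a
supersolution of some linear operator with elliptic principal part and drift at most `Λ`. The
matrix may vary with `x` in an arbitrary way. -/
def IsEllipticSupersolutionAt (ι : Type*) [Fintype ι] (Λ : ℝ) (w : E → ℝ) (x : E) : Prop :=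
  ∃ ξ : ι → E, IsEllipticFrame Λ ξ ∧
    ∑ k, fderiv ℝ (fderiv ℝ w) x (ξ k) (ξ k) ≤ Λ * ‖fderiv ℝ w x‖

/-- `b` satisfies `∑ aᵢⱼ ∂ᵢ∂ⱼ b > Λ |∇b|` at `x` for every elliptic matrix `a`, that is, `b` is a
strict subsolution of all the operators admitted in `IsEllipticSupersolutionAt`. -/
def IsStrictEllipticSubsolutionAt (ι : Type*) [Fintype ι] (Λ : ℝ) (b : E → ℝ) (x : E) : Prop :=
  ∀ ξ : ι → E, IsEllipticFrame Λ ξ →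
    Λ * ‖fderiv ℝ b x‖ < ∑ k, fderiv ℝ (fderiv ℝ b) x (ξ k) (ξ k)

theorem IsEllipticFrame.nonneg {Λ : ℝ} {ξ : ι → E} (hξ : IsEllipticFrame Λ ξ) : 0 ≤ Λ :=
  (Finset.sum_nonneg fun _ _ ↦ sq_nonneg _).trans hξ.sum_sq_norm_le

variable {w b : E → ℝ} {x : E} {Λ : ℝ}

theorem IsEllipticSupersolutionAt.not_isLocalMin_sub (hw : IsEllipticSupersolutionAt ι Λ w x)
    (hb : IsStrictEllipticSubsolutionAt ι Λ b x) (hw₂ : ContDiffAt ℝ 2 w x)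
    (hb₂ : ContDiffAt ℝ 2 b x) : ¬ IsLocalMin (fun y ↦ w y - b y) x := by
  intro hmin
  obtain ⟨ξ, hξ, hle⟩ := hw
  have hfst : fderiv ℝ w x = fderiv ℝ b x := by
    rw [← sub_eq_zero, ← fderiv_fun_sub (hw₂.differentiableAt two_ne_zero)
      (hb₂.differentiableAt two_ne_zero), hmin.fderiv_eq_zero]
  have hsnd (e : E) : fderiv ℝ (fderiv ℝ b) x e e ≤ fderiv ℝ (fderiv ℝ w) x e e := by
    have := fderiv_fderiv_apply_self_nonneg_of_isLocalMin (hw₂.sub hb₂) hmin e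
    rwa [fderiv_fderiv_sub_of_contDiffAt hw₂ hb₂, sub_apply, sub_apply, sub_nonneg] at this
  refine lt_irrefl (Λ * ‖fderiv ℝ b x‖) ?_
  calc Λ * ‖fderiv ℝ b x‖ < ∑ k, fderiv ℝ (fderiv ℝ b) x (ξ k) (ξ k) := hb ξ hξ
    _ ≤ ∑ k, fderiv ℝ (fderiv ℝ w) x (ξ k) (ξ k) := Finset.sum_le_sum fun k _ ↦ hsnd (ξ k)
    _ ≤ Λ * ‖fderiv ℝ b x‖ := hfst ▸ hle

theorem le_of_isStrictEllipticSubsolutionAt {K : Set E} (hK : IsCompact K)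
    (hwK : ContinuousOn w K) (hbK : ContinuousOn b K)
    (hlt : ∀ x ∈ K, w x < b x → x ∈ interior K ∧ ContDiffAt ℝ 2 w x ∧ ContDiffAt ℝ 2 b x ∧
      IsEllipticSupersolutionAt ι Λ w x ∧ IsStrictEllipticSubsolutionAt ι Λ b x) :
    ∀ x ∈ K, b x ≤ w x := by
  intro y hy
  obtain ⟨x, hxK, hmin⟩ := hK.exists_isMinOn ⟨y, hy⟩ (hwK.sub hbK)
  by_contra! hlt_y
  have hlt_x : w x < b x := sub_neg.mp ((hmin hy).trans_lt (sub_neg.mpr hlt_y))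
  obtain ⟨hx, hw₂, hb₂, hw, hb⟩ := hlt x hxK hlt_x
  exact hw.not_isLocalMin_sub hb hw₂ hb₂ (hmin.isLocalMin (mem_interior_iff_mem_nhds.mp hx))

end EllipticInequalities

section Hopf

variable {E : Type*} [NormedAddCommGroup E] {c x x₀ : E} {R α m Λ : ℝ}

/-- Hopf's barrier `m (exp (-α|y - c|²) - exp (-αR²))`, vanishing on the sphere of radius `R`
about `c` and, for large `α`, a strict subsolution away from the centre. -/
noncomputable def hopfBarrier (c : E) (R α m : ℝ) (y : E) : ℝ :=
  m * (exp (-α * ‖y - c‖ ^ 2) - exp (-α * R ^ 2))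

theorem hopfBarrier_of_mem_sphere (hx : x ∈ sphere c R) : hopfBarrier c R α m x = 0 := by
  simp [hopfBarrier, mem_sphere_iff_norm.mp hx]

theorem hopfBarrier_le (hα : 0 ≤ α) (hm : 0 ≤ m) : hopfBarrier c R α m x ≤ m := by
  have hexp : exp (-α * ‖x - c‖ ^ 2) ≤ 1 := by
    rw [exp_le_one_iff, neg_mul, neg_nonpos]; positivity
  exact mul_le_of_le_one_right hm (by linarith [exp_pos (-α * R ^ 2)])

variable [InnerProductSpace ℝ E] {ι : Type*} [Fintype ι]

theorem contDiff_hopfBarrier (n : WithTop ℕ∞) :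
    ContDiff ℝ n (hopfBarrier c R α m) := by
  unfold hopfBarrier
  exact contDiff_const.mul
    ((contDiff_const.mul ((contDiff_id.sub contDiff_const).norm_sq ℝ)).exp.sub contDiff_const)

theorem hasFDerivAt_exp_neg_mul_sq_norm_sub :
    HasFDerivAt (fun y ↦ exp (-α * ‖y - c‖ ^ 2))
      ((-(2 * α) * exp (-α * ‖x - c‖ ^ 2)) • innerSL ℝ (x - c)) x := by
  refine (((hasFDerivAt_sub_const c).norm_sq).const_mul (-α)).exp.congr_fderiv ?_
  ext e
  simp only [smul_apply, ContinuousLinearMap.comp_apply, ContinuousLinearMap.id_apply,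
    innerSL_apply_apply, smul_eq_mul, nsmul_eq_mul, Nat.cast_ofNat]
  ring

theorem fderiv_hopfBarrier : fderiv ℝ (hopfBarrier c R α m) = fun y ↦
    (-(2 * α * m) * exp (-α * ‖y - c‖ ^ 2)) • innerSL ℝ (y - c) := by
  ext1 y
  have hexp := hasFDerivAt_exp_neg_mul_sq_norm_sub (α := α) (c := c) (x := y)
  refine ((hexp.sub_const _).const_mul m).fderiv.trans ?_
  rw [smul_smul]
  ring_nf

theorem norm_fderiv_hopfBarrier (hα : 0 ≤ α) (hm : 0 ≤ m) :
    ‖fderiv ℝ (hopfBarrier c R α m) x‖ = 2 * α * m * exp (-α * ‖x - c‖ ^ 2) * ‖x - c‖ := by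
  rw [fderiv_hopfBarrier, norm_smul, innerSL_apply_norm, neg_mul, norm_neg,
    Real.norm_of_nonneg (by positivity)]

theorem fderiv_fderiv_hopfBarrier_apply_self (e : E) :
    fderiv ℝ (fderiv ℝ (hopfBarrier c R α m)) x e e =
      m * exp (-α * ‖x - c‖ ^ 2) * (4 * α ^ 2 * inner ℝ e (x - c) ^ 2 - 2 * α * ‖e‖ ^ 2) := by
  have hexp := hasFDerivAt_exp_neg_mul_sq_norm_sub (α := α) (c := c) (x := x)
  have hinner : HasFDerivAt (fun y ↦ innerSL ℝ (y - c)) (innerSL ℝ : E →L[ℝ] E →L[ℝ] ℝ) x :=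
    (innerSL ℝ : E →L[ℝ] E →L[ℝ] ℝ).hasFDerivAt.comp x ((hasFDerivAt_id x).sub_const c)
  have hself : (innerSL ℝ : E →L[ℝ] E →L[ℝ] ℝ) e e = ‖e‖ ^ 2 := real_inner_self_eq_norm_sq e
  rw [fderiv_hopfBarrier, ((hexp.const_mul _).fun_smul hinner).fderiv]
  simp only [add_apply, smul_apply, ContinuousLinearMap.smulRight_apply, hself, innerSL_apply_apply,
    smul_eq_mul, real_inner_comm e (x - c)]
  ring

theorem isStrictEllipticSubsolutionAt_hopfBarrier (hα : 0 < α) (hm : 0 < m)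
    (hx : Λ * (1 + ‖x - c‖) < 2 * α * ‖x - c‖ ^ 2) :
    IsStrictEllipticSubsolutionAt ι Λ (hopfBarrier c R α m) x := by
  intro ξ hξ
  simp only [norm_fderiv_hopfBarrier hα.le hm.le, fderiv_fderiv_hopfBarrier_apply_self,
    ← Finset.mul_sum, Finset.sum_sub_distrib]
  set δ := exp (-α * ‖x - c‖ ^ 2)
  have : 0 < δ := exp_pos _
  calc Λ * (2 * α * m * δ * ‖x - c‖) = m * δ * (2 * α) * (Λ * ‖x - c‖) := by ring
    _ < m * δ * (2 * α) * (2 * α * ‖x - c‖ ^ 2 - Λ) := by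
      gcongr
      linarith
    _ = m * δ * (4 * α ^ 2 * ‖x - c‖ ^ 2 - 2 * α * Λ) := by ring
    _ ≤ m * δ * (4 * α ^ 2 * ∑ k, inner ℝ (ξ k) (x - c) ^ 2 - 2 * α * ∑ k, ‖ξ k‖ ^ 2) := by
      gcongr
      · exact hξ.sq_norm_le _
      · exact hξ.sum_sq_norm_le

variable [ProperSpace E] {w : E → ℝ}

theorem exists_hopfBarrier_le (hR : 0 < R) (hw : ContinuousOn w (closedBall c R))
    (hw₂ : ∀ x ∈ ball c R, ContDiffAt ℝ 2 w x) (hpos : ∀ x ∈ ball c R, 0 < w x)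
    (hsup : ∀ x ∈ ball c R, IsEllipticSupersolutionAt ι Λ w x) :
    ∃ α > 0, ∃ m > 0, ∀ x ∈ closedBall c R, hopfBarrier c R α m x ≤ w x := by
  have hhalf : closedBall c (R / 2) ⊆ ball c R := closedBall_subset_ball (by linarith)
  obtain ⟨z, hz, hmin⟩ := (isCompact_closedBall c (R / 2)).exists_isMinOn
    (nonempty_closedBall.mpr (by positivity)) (hw.mono (hhalf.trans ball_subset_closedBall))
  obtain ⟨ξ, hξ, -⟩ := hsup c (mem_ball_self hR)
  have hΛ : 0 ≤ Λ := hξ.nonneg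
  have hnonneg : ∀ x ∈ closedBall c R, 0 ≤ w x := by
    rw [← closure_ball c hR.ne'] at hw ⊢
    exact le_on_closure (fun x hx ↦ (hpos x hx).le) continuousOn_const hw
  obtain ⟨α, hα, hαR⟩ : ∃ α > 0, 2 * (Λ * (1 + R)) < α * R ^ 2 :=
    ⟨(2 * (Λ * (1 + R)) + 1) / R ^ 2, by positivity, by field_simp; linarith⟩
  refine ⟨α, hα, w z, hpos z (hhalf hz), le_of_isStrictEllipticSubsolutionAt (ι := ι) (Λ := Λ)
    (isCompact_closedBall c R) hw (contDiff_hopfBarrier 0).continuous.continuousOn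
    fun x hx hlt ↦ ?_⟩
  have hannulus : R / 2 < ‖x - c‖ := by
    by_contra! hle
    exact hlt.not_ge ((hopfBarrier_le hα.le (hpos z (hhalf hz)).le).trans
      (hmin (mem_closedBall_iff_norm.mpr hle)))
  have hxball : x ∈ ball c R := by
    rw [← closedBall_sdiff_sphere]
    exact ⟨hx, fun hs ↦ hlt.not_ge ((hopfBarrier_of_mem_sphere hs).trans_le (hnonneg x hx))⟩
  refine ⟨ball_subset_interior_closedBall hxball, hw₂ x hxball, (contDiff_hopfBarrier 2).contDiffAt,
    hsup x hxball, isStrictEllipticSubsolutionAt_hopfBarrier hα (hpos z (hhalf hz)) ?_⟩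
  calc Λ * (1 + ‖x - c‖) ≤ Λ * (1 + R) := by gcongr; exact mem_closedBall_iff_norm.mp hx
    _ < 2 * α * (R / 2) ^ 2 := by linarith
    _ ≤ 2 * α * ‖x - c‖ ^ 2 := by gcongr

theorem hopf_boundary_point_lemma (hR : 0 < R) (hw : ContinuousOn w (closedBall c R))
    (hw₂ : ∀ x ∈ ball c R, ContDiffAt ℝ 2 w x) (hpos : ∀ x ∈ ball c R, 0 < w x)
    (hsup : ∀ x ∈ ball c R, IsEllipticSupersolutionAt ι Λ w x)
    (hx₀ : x₀ ∈ sphere c R) (hwx₀ : w x₀ = 0) (hd : DifferentiableAt ℝ w x₀) :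
    0 < fderiv ℝ w x₀ (c - x₀) := by
  obtain ⟨α, hα, m, hm, hle⟩ := exists_hopfBarrier_le hR hw hw₂ hpos hsup
  have hmin : IsMinOn (fun y ↦ w y - hopfBarrier c R α m y) (closedBall c R) x₀ := fun y hy ↦ by
    simpa [hwx₀, hopfBarrier_of_mem_sphere hx₀] using hle y hy
  have hinward : c - x₀ ∈ posTangentConeAt (closedBall c R) x₀ :=
    sub_mem_posTangentConeAt_of_segment_subset ((convex_closedBall c R).segment_subset
      (sphere_subset_closedBall hx₀) (mem_closedBall_self hR.le))
  have hbarrier : DifferentiableAt ℝ (hopfBarrier c R α m) x₀ :=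
    (contDiff_hopfBarrier 1).differentiable one_ne_zero x₀
  have hslope := hmin.localize.hasFDerivWithinAt_nonneg
    (hd.hasFDerivAt.fun_sub hbarrier.hasFDerivAt).hasFDerivWithinAt hinward
  calc 0 < 2 * α * m * exp (-α * ‖x₀ - c‖ ^ 2) * R ^ 2 := by positivity
    _ = fderiv ℝ (hopfBarrier c R α m) x₀ (c - x₀) := by
      rw [fderiv_hopfBarrier, ← neg_sub x₀ c, ← mem_sphere_iff_norm.mp hx₀, map_neg, smul_apply,
        innerSL_apply_apply, real_inner_self_eq_norm_sq, smul_eq_mul]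
      ring
    _ ≤ fderiv ℝ w x₀ (c - x₀) := sub_nonneg.mp hslope

end Hopf

section StrongMinimumPrinciple

theorem exists_ball_ne_of_eq_on_sphere {X Y : Type*} [MetricSpace X] [ProperSpace X]
    [TopologicalSpace Y] [T1Space Y] {f : X → Y} {y : Y} {c z : X}
    (hf : ContinuousOn f (closedBall c (dist z c))) (hc : f c ≠ y) (hz : f z = y) :
    ∃ R > 0, R ≤ dist z c ∧ (∃ x ∈ sphere c R, f x = y) ∧ ∀ x ∈ ball c R, f x ≠ y := by
  set K := closedBall c (dist z c) ∩ f ⁻¹' {y}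
  have hK : IsCompact K := (isCompact_closedBall _ _).of_isClosed_subset
    (hf.preimage_isClosed_of_isClosed isClosed_closedBall isClosed_singleton) inter_subset_left
  obtain ⟨x, ⟨hxball, hx⟩, hmin⟩ := hK.exists_isMinOn ⟨z, mem_closedBall.mpr le_rfl, hz⟩
    (f := fun x ↦ dist x c) (by fun_prop)
  refine ⟨dist x c, dist_pos.mpr ?_, hxball, ⟨x, rfl, hx⟩, fun p hp hfp ↦ ?_⟩
  · rintro rfl
    exact hc hx
  · exact (mem_ball.mp hp).not_ge (hmin ⟨(mem_ball.mp hp).le.trans hxball, hfp⟩)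

variable {E : Type*} [NormedAddCommGroup E] [InnerProductSpace ℝ E] [ProperSpace E]
  {ι : Type*} [Fintype ι] {Ω : Set E} {w : E → ℝ} {c x₀ z : E} {R Λ : ℝ}

theorem eventually_eq_zero_of_isEllipticSupersolutionAt (hΩ : IsOpen Ω)
    (hw : ContDiffOn ℝ 2 w Ω) (hnonneg : ∀ x ∈ Ω, 0 ≤ w x)
    (hsup : ∀ K ⊆ Ω, IsCompact K → ∃ Λ, ∀ x ∈ K, IsEllipticSupersolutionAt ι Λ w x)
    (hz : z ∈ Ω) (hwz : w z = 0) : ∀ᶠ x in 𝓝 z, w x = 0 := by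
  have hw₂ {x : E} (hx : x ∈ Ω) : ContDiffAt ℝ 2 w x := hw.contDiffAt (hΩ.mem_nhds hx)
  obtain ⟨δ, hδ, hδΩ⟩ := Metric.isOpen_iff.mp hΩ z hz
  filter_upwards [ball_mem_nhds z (half_pos hδ)] with c hc
  by_contra hwc
  have hzc : dist z c < δ / 2 := mem_ball'.mp hc
  have hsub : closedBall c (dist z c) ⊆ Ω := fun y hy ↦
    hδΩ (mem_ball.mpr (by linarith [mem_closedBall.mp hy, dist_triangle_right y z c]))
  obtain ⟨R, hR, hRle, ⟨x₀, hx₀, hwx₀⟩, hne⟩ :=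
    exists_ball_ne_of_eq_on_sphere (hw.continuousOn.mono hsub) hwc hwz
  have hclosed : closedBall c R ⊆ Ω := (closedBall_subset_closedBall hRle).trans hsub
  have hball : ball c R ⊆ Ω := ball_subset_closedBall.trans hclosed
  have hx₀Ω : x₀ ∈ Ω := hclosed (sphere_subset_closedBall hx₀)
  have hmin : IsLocalMin w x₀ := by
    filter_upwards [hΩ.mem_nhds hx₀Ω] with y hy using hwx₀.trans_le (hnonneg y hy)
  obtain ⟨Λ, hΛ⟩ := hsup _ hclosed (isCompact_closedBall c R)
  have hslope : 0 < fderiv ℝ w x₀ (c - x₀) := hopf_boundary_point_lemma hR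
    (hw.continuousOn.mono hclosed) (fun x hx ↦ hw₂ (hball hx))
    (fun x hx ↦ (hnonneg x (hball hx)).lt_of_ne' (hne x hx))
    (fun x hx ↦ hΛ x (ball_subset_closedBall hx)) hx₀ hwx₀
    ((hw₂ hx₀Ω).differentiableAt two_ne_zero)
  simp [hmin.fderiv_eq_zero] at hslope

theorem strong_minimum_principle (hΩ : IsOpen Ω) (hΩc : IsPreconnected Ω)
    (hw : ContDiffOn ℝ 2 w Ω) (hnonneg : ∀ x ∈ Ω, 0 ≤ w x)
    (hsup : ∀ K ⊆ Ω, IsCompact K → ∃ Λ, ∀ x ∈ K, IsEllipticSupersolutionAt ι Λ w x)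
    (hz : z ∈ Ω) (hwz : w z = 0) : ∀ x ∈ Ω, w x = 0 := by
  have hspread {x : E} (hx : x ∈ Ω) (hwx : w x = 0) : ∀ᶠ y in 𝓝 x, w y = 0 :=
    eventually_eq_zero_of_isEllipticSupersolutionAt hΩ hw hnonneg hsup hx hwx
  suffices Ω ⊆ {x | ∀ᶠ y in 𝓝 x, w y = 0} from fun x hx ↦ (this hx).self_of_nhds
  refine hΩc.subset_of_closure_inter_subset isOpen_setOfPred_eventually_nhds
    ⟨z, hz, hspread hz hwz⟩ ?_
  rintro x ⟨hxcl, hx⟩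
  refine hspread hx (of_not_not fun hne ↦ ?_)
  have hne_near : ∀ᶠ y in 𝓝 x, w y ≠ 0 :=
    (hw.continuousOn.continuousAt (hΩ.mem_nhds hx)).eventually_ne hne
  obtain ⟨y, hy, hwy⟩ := ((mem_closure_iff_frequently.mp hxcl).and_eventually hne_near).exists
  exact hwy hy.self_of_nhds

theorem strong_minimum_principle_of_touching_ball (hΩ : IsOpen Ω) (hΩc : IsPreconnected Ω)
    (hw : ContDiffOn ℝ 2 w Ω) (hnonneg : ∀ x ∈ Ω, 0 ≤ w x)
    (hsup : ∀ K ⊆ Ω, IsCompact K → ∃ Λ, ∀ x ∈ K, IsEllipticSupersolutionAt ι Λ w x)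
    (hR : 0 < R) (hball : ball c R ⊆ Ω) (hwball : ContinuousOn w (closedBall c R))
    (hsupball : ∀ x ∈ ball c R, IsEllipticSupersolutionAt ι Λ w x)
    (hx₀ : x₀ ∈ sphere c R) (hwx₀ : w x₀ = 0) (hd : DifferentiableAt ℝ w x₀)
    (hslope : fderiv ℝ w x₀ (c - x₀) ≤ 0) : ∀ x ∈ Ω, w x = 0 := by
  suffices ∃ z ∈ Ω, w z = 0 from
    let ⟨_, hz, hwz⟩ := this
    strong_minimum_principle hΩ hΩc hw hnonneg hsup hz hwz
  by_contra! hne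
  exact hslope.not_gt <| hopf_boundary_point_lemma hR hwball
    (fun x hx ↦ hw.contDiffAt (hΩ.mem_nhds (hball hx)))
    (fun x hx ↦ (hnonneg x (hball hx)).lt_of_ne' (hne x (hball hx))) hsupball hx₀ hwx₀ hd

end StrongMinimumPrinciple

section Gradient

variable {E F : Type*} [NormedAddCommGroup E] [NormedSpace ℝ E]
  [NormedAddCommGroup F] [InnerProductSpace ℝ F]

theorem fderiv_inv_sqrt_one_add_sq_norm_smul {G : E → F} {G' : E →L[ℝ] F} {x : E}
    (hG : HasFDerivAt G G' x) (e : E) :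
    fderiv ℝ (fun y ↦ (√(1 + ‖G y‖ ^ 2))⁻¹ • G y) x e =
      (√(1 + ‖G x‖ ^ 2))⁻¹ • G' e -
        ((√(1 + ‖G x‖ ^ 2))⁻¹ ^ 3 * inner ℝ (G x) (G' e)) • G x := by
  have hpos : 0 < 1 + ‖G x‖ ^ 2 := by positivity
  have hroot : HasFDerivAt (fun y ↦ √(1 + ‖G y‖ ^ 2)) _ x :=
    (hG.norm_sq.const_add 1).sqrt hpos.ne'
  have hinv : HasFDerivAt (fun y ↦ (√(1 + ‖G y‖ ^ 2))⁻¹) _ x :=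
    (hasDerivAt_inv (sqrt_pos.mpr hpos).ne').comp_hasFDerivAt x hroot
  rw [(hinv.fun_smul hG).fderiv]
  simp only [add_apply, smul_apply, ContinuousLinearMap.smulRight_apply,
    ContinuousLinearMap.comp_apply, innerSL_apply_apply, smul_eq_mul, nsmul_eq_mul, Nat.cast_ofNat]
  module

variable [CompleteSpace F] {f g : F → ℝ} {x : F}

theorem norm_gradient (f : F → ℝ) (x : F) : ‖gradient f x‖ = ‖fderiv ℝ f x‖ := by
  rw [← toDual_gradient, LinearIsometryEquiv.norm_map]

theorem gradient_sub (hf : DifferentiableAt ℝ f x) (hg : DifferentiableAt ℝ g x) :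
    gradient (fun y ↦ f y - g y) x = gradient f x - gradient g x := by
  simp only [gradient, fderiv_fun_sub hf hg, map_sub]

theorem exists_hasFDerivAt_gradient (hf : ContDiffAt ℝ 2 f x) :
    ∃ D : F →L[ℝ] F, HasFDerivAt (gradient f) D x ∧
      ∀ e e', inner ℝ (D e) e' = fderiv ℝ (fderiv ℝ f) x e e' := by
  let riesz : StrongDual ℝ F ≃ₗᵢ[ℝ] F := (InnerProductSpace.toDual ℝ F).symm
  let D := (riesz : StrongDual ℝ F →L[ℝ] F) ∘L fderiv ℝ (fderiv ℝ f) x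
  have hD : HasFDerivAt (gradient f) D x :=
    (riesz : StrongDual ℝ F →L[ℝ] F).hasFDerivAt.comp x
    (differentiableAt_fderiv_of_contDiffAt_two hf).hasFDerivAt
  exact ⟨D, hD, fun e e' ↦ InnerProductSpace.toDual_symm_apply⟩

end Gradient

section EuclideanCoordinates

variable {ι : Type*} [Fintype ι] [DecidableEq ι]

theorem apply_eq_sum_smul_apply_single {M : Type*} [AddCommGroup M] [Module ℝ M]
    [TopologicalSpace M] (f : EuclideanSpace ℝ ι →L[ℝ] M) (p : EuclideanSpace ℝ ι) :
    f p = ∑ i, p i • f (EuclideanSpace.single i 1) := by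
  conv_lhs => rw [← (EuclideanSpace.basisFun ι ℝ).sum_repr p]
  simp

theorem fderiv_apply_single (f : EuclideanSpace ℝ ι → ℝ) (x : EuclideanSpace ℝ ι) (i : ι) (a : ℝ) :
    fderiv ℝ f x (EuclideanSpace.single i a) = a * gradient f x i := by
  rw [← inner_gradient_left, EuclideanSpace.inner_single_right, conj_trivial]

end EuclideanCoordinates

local notation "ℝ²" => EuclideanSpace ℝ (Fin 2)

section MeanCurvature

/-- The rotation of the plane by a right angle, `(p₀, p₁) ↦ (-p₁, p₀)`. -/
def quarterTurn : ℝ² →ₗᵢ[ℝ] ℝ² where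
  toFun p := !₂[-p 1, p 0]
  map_add' p q := by ext i; fin_cases i <;> simp [add_comm]
  map_smul' a p := by ext i; fin_cases i <;> simp
  norm_map' p := by simp [EuclideanSpace.norm_eq, Fin.sum_univ_two, add_comm]

/-- Vectors whose squares sum to `(1 + |p|²) I - p ⊗ p = I + Jp ⊗ Jp`, the coefficient matrix of
the mean curvature operator in non-divergence form at slope `p`; here `J` is the quarter turn. -/
noncomputable def graphFrame (p : ℝ²) : Fin 3 → ℝ² :=
  ![EuclideanSpace.single 0 1, EuclideanSpace.single 1 1, quarterTurn p]

theorem sum_sq_norm_graphFrame (p : ℝ²) : ∑ k, ‖graphFrame p k‖ ^ 2 = 2 + ‖p‖ ^ 2 := by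
  simp [graphFrame, Fin.sum_univ_three, one_add_one_eq_two]

theorem isEllipticFrame_graphFrame {Λ : ℝ} {p : ℝ²} (hp : 2 + ‖p‖ ^ 2 ≤ Λ) :
    IsEllipticFrame Λ (graphFrame p) where
  sq_norm_le η := by
    have hη : ‖η‖ ^ 2 = η 0 ^ 2 + η 1 ^ 2 := by simp [EuclideanSpace.norm_sq_eq, Fin.sum_univ_two]
    rw [hη, Fin.sum_univ_three]
    simpa [graphFrame, EuclideanSpace.inner_single_left] using sq_nonneg _
  sum_sq_norm_le := (sum_sq_norm_graphFrame p).trans_le hp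

theorem sum_graphFrame_apply (B : ℝ² →L[ℝ] ℝ² →L[ℝ] ℝ) (p : ℝ²) :
    ∑ k, B (graphFrame p k) (graphFrame p k) =
      (1 + ‖p‖ ^ 2) * ∑ i, B (EuclideanSpace.single i 1) (EuclideanSpace.single i 1) - B p p := by
  have hturn : quarterTurn p =
      -p 1 • EuclideanSpace.single 0 1 + p 0 • EuclideanSpace.single 1 1 := by
    ext i; fin_cases i <;> simp [quarterTurn]
  rw [EuclideanSpace.real_norm_sq_eq, apply_eq_sum_smul_apply_single (B p),
    apply_eq_sum_smul_apply_single B p]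
  simp only [graphFrame, Fin.sum_univ_two, Fin.sum_univ_three, Matrix.cons_val, hturn, map_add,
    map_smul, add_apply, smul_apply, smul_eq_mul]
  ring

variable {u v : ℝ² → ℝ} {x : ℝ²}

theorem cmcOp_eq (hu : ContDiffAt ℝ 2 u x) :
    cmcOp u x = (√(1 + ‖gradient u x‖ ^ 2))⁻¹ *
        ∑ i, fderiv ℝ (fderiv ℝ u) x (EuclideanSpace.single i 1) (EuclideanSpace.single i 1) -
      (√(1 + ‖gradient u x‖ ^ 2))⁻¹ ^ 3 *
        fderiv ℝ (fderiv ℝ u) x (gradient u x) (gradient u x) := by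
  obtain ⟨D, hD, hinner⟩ := exists_hasFDerivAt_gradient hu
  set p := gradient u x with hp
  have hpp : inner ℝ (D p) p = ∑ i, p i * inner ℝ p (D (EuclideanSpace.single i 1)) := by
    simp only [real_inner_comm p, apply_eq_sum_smul_apply_single D p, inner_sum, inner_smul_right]
  simp only [cmcOp, vecDiv, fderiv_inv_sqrt_one_add_sq_norm_smul hD, ← hp, ← hinner, hpp,
    EuclideanSpace.inner_single_right, Fin.sum_univ_two, PiLp.sub_apply, PiLp.smul_apply,
    smul_eq_mul, conj_trivial, one_mul]
  ring

theorem sum_graphFrame_eq_mul_cmcOp (hu : ContDiffAt ℝ 2 u x) :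
    ∑ k, fderiv ℝ (fderiv ℝ u) x (graphFrame (gradient u x) k) (graphFrame (gradient u x) k) =
      √(1 + ‖gradient u x‖ ^ 2) ^ 3 * cmcOp u x := by
  have hpos : 0 < 1 + ‖gradient u x‖ ^ 2 := by positivity
  have hroot : √(1 + ‖gradient u x‖ ^ 2) ≠ 0 := (sqrt_pos.mpr hpos).ne'
  rw [sum_graphFrame_apply, cmcOp_eq hu]
  field_simp
  rw [sq_sqrt hpos.le]
  ring

theorem abs_sum_graphFrame_le (B : ℝ² →L[ℝ] ℝ² →L[ℝ] ℝ) (p : ℝ²) :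
    |∑ k, B (graphFrame p k) (graphFrame p k)| ≤ ‖B‖ * (2 + ‖p‖ ^ 2) := by
  rw [← sum_sq_norm_graphFrame, Finset.mul_sum]
  refine (Finset.abs_sum_le_sum_abs _ _).trans (Finset.sum_le_sum fun k _ ↦ ?_)
  exact (B.le_opNorm₂ _ _).trans_eq (by ring)

theorem sum_graphFrame_sub_le (B : ℝ² →L[ℝ] ℝ² →L[ℝ] ℝ) (p q : ℝ²) :
    ∑ k, B (graphFrame q k) (graphFrame q k) - ∑ k, B (graphFrame p k) (graphFrame p k) ≤
      ‖B‖ * (‖p‖ + ‖q‖) * ‖p - q‖ := by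
  set J := quarterTurn
  calc _ = B (J q) (J q) - B (J p) (J p) := by simp [graphFrame, Fin.sum_univ_three, J]
    _ = B (J (q - p)) (J q) + B (J p) (J (q - p)) := by simp
    _ ≤ ‖B‖ * ‖J (q - p)‖ * ‖J q‖ + ‖B‖ * ‖J p‖ * ‖J (q - p)‖ :=
      add_le_add ((le_abs_self _).trans (B.le_opNorm₂ _ _))
        ((le_abs_self _).trans (B.le_opNorm₂ _ _))
    _ = ‖B‖ * (‖p‖ + ‖q‖) * ‖p - q‖ := by
      simp only [LinearIsometry.norm_map, norm_sub_rev q p]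
      ring

theorem abs_cmcOp_le (hu : ContDiffAt ℝ 2 u x) :
    |cmcOp u x| ≤ ‖fderiv ℝ (fderiv ℝ u) x‖ * (2 + ‖gradient u x‖ ^ 2) := by
  have hone : 1 ≤ √(1 + ‖gradient u x‖ ^ 2) ^ 3 :=
    one_le_pow₀ (one_le_sqrt.mpr (le_add_of_nonneg_right (sq_nonneg _)))
  calc |cmcOp u x| ≤ √(1 + ‖gradient u x‖ ^ 2) ^ 3 * |cmcOp u x| :=
        le_mul_of_one_le_left (abs_nonneg _) hone
    _ = |√(1 + ‖gradient u x‖ ^ 2) ^ 3 * cmcOp u x| := by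
      rw [abs_mul, abs_of_nonneg (zero_le_one.trans hone)]
    _ ≤ ‖fderiv ℝ (fderiv ℝ u) x‖ * (2 + ‖gradient u x‖ ^ 2) := by
      rw [← sum_graphFrame_eq_mul_cmcOp hu]
      exact abs_sum_graphFrame_le _ _

theorem sum_graphFrame_fderiv_fderiv_sub_le (hu : ContDiffAt ℝ 2 u x) (hv : ContDiffAt ℝ 2 v x)
    (hle : cmcOp u x ≤ cmcOp v x) {G M : ℝ} {L : NNReal}
    (hL : LipschitzOnWith L (fun p : ℝ² ↦ √(1 + ‖p‖ ^ 2) ^ 3) (closedBall 0 G))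
    (hGu : ‖gradient u x‖ ≤ G) (hGv : ‖gradient v x‖ ≤ G)
    (hM : ‖fderiv ℝ (fderiv ℝ v) x‖ ≤ M) :
    ∑ k, fderiv ℝ (fderiv ℝ fun y ↦ u y - v y) x (graphFrame (gradient u x) k)
        (graphFrame (gradient u x) k) ≤
      (L * (M * (2 + G ^ 2)) + M * (G + G)) * ‖fderiv ℝ (fun y ↦ u y - v y) x‖ := by
  have hgrad : ‖fderiv ℝ (fun y ↦ u y - v y) x‖ = ‖gradient u x - gradient v x‖ := by
    rw [← norm_gradient, gradient_sub (hu.differentiableAt two_ne_zero)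
      (hv.differentiableAt two_ne_zero)]
  have hu_eq := sum_graphFrame_eq_mul_cmcOp hu
  have hv_eq := sum_graphFrame_eq_mul_cmcOp hv
  have hframe := sum_graphFrame_sub_le (fderiv ℝ (fderiv ℝ v) x) (gradient u x) (gradient v x)
  have hlip := hL.norm_sub_le (mem_closedBall_zero_iff.mpr hGu) (mem_closedBall_zero_iff.mpr hGv)
  have hcmc := abs_cmcOp_le hv
  rw [hgrad]
  simp only [fderiv_fderiv_sub_of_contDiffAt hu hv, sub_apply, Finset.sum_sub_distrib]
  set p := gradient u x
  set q := gradient v x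
  set B := fderiv ℝ (fderiv ℝ v) x
  set W : ℝ² → ℝ := fun p ↦ √(1 + ‖p‖ ^ 2)
  have hM₀ : 0 ≤ M := (norm_nonneg B).trans hM
  -- Only `W(p)³ - W(q)³` and the change of coefficients from `p` to `q` remain, both `O(|p - q|)`.
  calc _ ≤ W p ^ 3 * cmcOp v x - ∑ k, B (graphFrame p k) (graphFrame p k) := by
        rw [hu_eq]
        gcongr
    _ = (W p ^ 3 - W q ^ 3) * cmcOp v x + (∑ k, B (graphFrame q k) (graphFrame q k) -
        ∑ k, B (graphFrame p k) (graphFrame p k)) := by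
      rw [hv_eq]
      ring
    _ ≤ ‖W p ^ 3 - W q ^ 3‖ * |cmcOp v x| + ‖B‖ * (‖p‖ + ‖q‖) * ‖p - q‖ := by
      exact add_le_add ((le_abs_self _).trans (abs_mul _ _).le) hframe
    _ ≤ L * ‖p - q‖ * (M * (2 + G ^ 2)) + M * (G + G) * ‖p - q‖ := by
      gcongr
      exact hcmc.trans (by gcongr)
    _ = (L * (M * (2 + G ^ 2)) + M * (G + G)) * ‖p - q‖ := by ring

variable {S K : Set ℝ²}

theorem exists_forall_isEllipticSupersolutionAt_sub (hS : IsOpen S) (hu : ContDiffOn ℝ 2 u S)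
    (hv : ContDiffOn ℝ 2 v S) (hK : IsCompact K) (hKS : K ⊆ S) :
    ∃ Λ, ∀ x ∈ K, cmcOp u x ≤ cmcOp v x →
      IsEllipticSupersolutionAt (Fin 3) Λ (fun y ↦ u y - v y) x := by
  have hdu := hu.fderiv_of_isOpen (m := 1) hS (by norm_num)
  have hdv := hv.fderiv_of_isOpen (m := 1) hS (by norm_num)
  obtain ⟨Gu, hGu⟩ := hK.exists_bound_of_continuousOn (hdu.continuousOn.mono hKS)
  obtain ⟨Gv, hGv⟩ := hK.exists_bound_of_continuousOn (hdv.continuousOn.mono hKS)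
  obtain ⟨M, hM⟩ := hK.exists_bound_of_continuousOn
    ((hdv.continuousOn_fderiv_of_isOpen hS le_rfl).mono hKS)
  set G := max Gu Gv
  have hcube : ContDiff ℝ 1 fun p : ℝ² ↦ √(1 + ‖p‖ ^ 2) ^ 3 :=
    ((contDiff_const.add (contDiff_norm_sq ℝ)).sqrt fun p ↦ by positivity).pow 3
  obtain ⟨L, hL⟩ := hcube.contDiffOn.exists_lipschitzOnWith one_ne_zero
    (convex_closedBall (0 : ℝ²) G) (isCompact_closedBall 0 G)
  refine ⟨max (2 + G ^ 2) (L * (M * (2 + G ^ 2)) + M * (G + G)), fun x hx hle ↦ ?_⟩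
  have hux : ‖gradient u x‖ ≤ G := (norm_gradient u x).trans_le (le_max_of_le_left (hGu x hx))
  have hvx : ‖gradient v x‖ ≤ G := (norm_gradient v x).trans_le (le_max_of_le_right (hGv x hx))
  have hnhds : S ∈ 𝓝 x := hS.mem_nhds (hKS hx)
  refine ⟨graphFrame (gradient u x), isEllipticFrame_graphFrame ?_,
    (sum_graphFrame_fderiv_fderiv_sub_le (hu.contDiffAt hnhds) (hv.contDiffAt hnhds) hle hL hux hvx
      (hM x hx)).trans ?_⟩
  · exact le_max_of_le_left (by gcongr)
  · gcongr
    exact le_max_right _ _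

theorem eqOn_of_cmcOp_le_of_touching_ball {Ω : Set ℝ²} {c x₀ : ℝ²} {R : ℝ} (hS : IsOpen S)
    (hu : ContDiffOn ℝ 2 u S) (hv : ContDiffOn ℝ 2 v S) (hΩ : IsOpen Ω) (hΩc : IsPreconnected Ω)
    (hΩS : Ω ⊆ S) (hvu : ∀ x ∈ Ω, v x ≤ u x) (hle : ∀ x ∈ Ω, cmcOp u x ≤ cmcOp v x)
    (hR : 0 < R) (hball : ball c R ⊆ Ω) (hclosed : closedBall c R ⊆ S) (hx₀ : x₀ ∈ sphere c R)
    (htouch : u x₀ = v x₀) (hslope : fderiv ℝ u x₀ (c - x₀) ≤ fderiv ℝ v x₀ (c - x₀)) :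
    EqOn u v Ω := by
  have hw : ContDiffOn ℝ 2 (fun y ↦ u y - v y) S := hu.sub hv
  have hsup {K : Set ℝ²} (hK : IsCompact K) (hKS : K ⊆ S) :=
    exists_forall_isEllipticSupersolutionAt_sub hS hu hv hK hKS
  obtain ⟨Λ, hΛ⟩ := hsup (isCompact_closedBall c R) hclosed
  have hx₀S : S ∈ 𝓝 x₀ := hS.mem_nhds (hclosed (sphere_subset_closedBall hx₀))
  have hux₀ := (hu.contDiffAt hx₀S).differentiableAt two_ne_zero
  have hvx₀ := (hv.contDiffAt hx₀S).differentiableAt two_ne_zero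
  have hzero : ∀ x ∈ Ω, u x - v x = 0 :=
    strong_minimum_principle_of_touching_ball (ι := Fin 3) hΩ hΩc (hw.mono hΩS)
      (fun x hx ↦ sub_nonneg.mpr (hvu x hx))
      (fun K hKΩ hK ↦ (hsup hK (hKΩ.trans hΩS)).imp fun _ h x hx ↦ h x hx (hle x (hKΩ hx)))
      hR hball (hw.continuousOn.mono hclosed)
      (fun x hx ↦ hΛ x (ball_subset_closedBall hx) (hle x (hball hx))) hx₀
      (sub_eq_zero.mpr htouch) (hux₀.sub hvx₀)
      (by simpa [fderiv_fun_sub hux₀ hvx₀] using hslope)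
  exact fun x hx ↦ sub_eq_zero.mp (hzero x hx)

end MeanCurvature

section HalfDisk

/-- The open half-disk `{|x| < r, x₂ > 0}`; the second coordinate `x₂` has index `1`. -/
def upperHalfDisk (r : ℝ) : Set ℝ² := {x | ‖x‖ < r ∧ 0 < x 1}

variable {r R : ℝ}

theorem isOpen_upperHalfDisk : IsOpen (upperHalfDisk r) := by
  have hcoord : Continuous fun x : ℝ² ↦ x 1 := by fun_prop
  exact (isOpen_lt continuous_norm continuous_const).inter (isOpen_lt continuous_const hcoord)

theorem convex_upperHalfDisk : Convex ℝ (upperHalfDisk r) := by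
  have hdisk : Convex ℝ {x : ℝ² | ‖x‖ < r} := by
    simpa only [ball_zero_eq] using convex_ball (0 : ℝ²) r
  exact hdisk.inter (convex_halfSpace_gt (EuclideanSpace.proj 1 : ℝ² →L[ℝ] ℝ).isLinear 0)

theorem subset_closure_upperHalfDisk :
    {x : ℝ² | ‖x‖ < r ∧ 0 ≤ x 1} ⊆ closure (upperHalfDisk r) := by
  rintro x ⟨hxr, hx₁⟩
  let lift (t : ℝ) : ℝ² := x + t • EuclideanSpace.single 1 1
  have hlift : Tendsto lift (𝓝[>] 0) (𝓝 x) := by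
    have hcont : Continuous lift := by fun_prop
    simpa [lift] using (hcont.tendsto 0).mono_left nhdsWithin_le_nhds
  refine mem_closure_of_tendsto hlift ?_
  filter_upwards [hlift.norm.eventually_lt_const hxr, self_mem_nhdsWithin] with t ht htpos
  exact ⟨ht, by simpa [lift] using add_pos_of_nonneg_of_pos hx₁ htpos⟩

theorem norm_le_norm_sub_single_add (hR : 0 ≤ R) (x : ℝ²) :
    ‖x‖ ≤ ‖x - EuclideanSpace.single 1 R‖ + R := by
  simpa [abs_of_nonneg hR] using norm_le_norm_sub_add x (EuclideanSpace.single 1 R)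

theorem sub_norm_sub_single_le_apply_one (x : ℝ²) :
    R - ‖x - EuclideanSpace.single 1 R‖ ≤ x 1 := by
  have hcoord : |x 1 - R| ≤ ‖x - EuclideanSpace.single 1 R‖ := by
    have := PiLp.norm_apply_le (x - EuclideanSpace.single 1 R) 1
    rwa [PiLp.sub_apply, PiLp.single_eq_same, norm_eq_abs] at this
  linarith [(abs_le.mp hcoord).1]

theorem ball_single_subset_upperHalfDisk (hR : 0 ≤ R) (hRr : 2 * R ≤ r) :
    ball (EuclideanSpace.single 1 R) R ⊆ upperHalfDisk r := by
  intro x hx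
  rw [mem_ball_iff_norm] at hx
  exact ⟨by linarith [norm_le_norm_sub_single_add hR x],
    by linarith [sub_norm_sub_single_le_apply_one (R := R) x]⟩

theorem closedBall_single_subset (hR : 0 ≤ R) (hRr : 2 * R < r) :
    closedBall (EuclideanSpace.single 1 R) R ⊆ {x : ℝ² | ‖x‖ < r ∧ 0 ≤ x 1} := by
  intro x hx
  rw [mem_closedBall_iff_norm] at hx
  exact ⟨by linarith [norm_le_norm_sub_single_add hR x],
    by linarith [sub_norm_sub_single_le_apply_one (R := R) x]⟩

end HalfDisk

theorem boundary_tangency_principle_general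
    (r : ℝ) (hr : 0 < r) (u v : ℝ² → ℝ)
    (hu : ∃ U : Set ℝ², IsOpen U ∧ {x : ℝ² | ‖x‖ < r ∧ 0 ≤ x 1} ⊆ U ∧ ContDiffOn ℝ 2 u U)
    (hv : ∃ U : Set ℝ², IsOpen U ∧ {x : ℝ² | ‖x‖ < r ∧ 0 ≤ x 1} ⊆ U ∧ ContDiffOn ℝ 2 v U)
    (huv : ∀ x ∈ upperHalfDisk r, v x ≤ u x) (htouch : u 0 = v 0)
    (hslope : gradient u 0 1 ≤ gradient v 0 1)
    (hle : ∀ x ∈ upperHalfDisk r, cmcOp u x ≤ cmcOp v x) :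
    EqOn u v {x : ℝ² | ‖x‖ < r ∧ 0 ≤ x 1} := by
  obtain ⟨U, hU, hDU, huU⟩ := hu
  obtain ⟨V, hV, hDV, hvV⟩ := hv
  have hDS : {x : ℝ² | ‖x‖ < r ∧ 0 ≤ x 1} ⊆ U ∩ V := subset_inter hDU hDV
  have hΩD : upperHalfDisk r ⊆ {x : ℝ² | ‖x‖ < r ∧ 0 ≤ x 1} := fun x hx ↦ ⟨hx.1, hx.2.le⟩
  have hinterior : EqOn u v (upperHalfDisk r) := by
    refine eqOn_of_cmcOp_le_of_touching_ball (c := EuclideanSpace.single 1 (r / 3)) (x₀ := 0)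
      (R := r / 3) (hU.inter hV) (huU.mono inter_subset_left) (hvV.mono inter_subset_right)
      isOpen_upperHalfDisk convex_upperHalfDisk.isPreconnected (hΩD.trans hDS) huv hle
      (by positivity) (ball_single_subset_upperHalfDisk (by positivity) (by linarith))
      ((closedBall_single_subset (by positivity) (by linarith)).trans hDS)
      (by simp [abs_of_pos hr]) htouch ?_
    rw [sub_zero, fderiv_apply_single, fderiv_apply_single]
    gcongr
  exact hinterior.of_subset_closure (huU.continuousOn.mono hDU) (hvV.continuousOn.mono hDV) hΩD
    subset_closure_upperHalfDisk

/-- Boundary tangency principle for constant-mean-curvature graphs on the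
closed upper half-disk `D⁺ = {x : |x| < r, x₂ ≥ 0}`. -/
theorem boundary_tangency_principle
    (r : ℝ) (hr : 0 < r)
    (u v : EuclideanSpace ℝ (Fin 2) → ℝ)
    -- `u` and `v` are C² on `D⁺`, i.e. they extend C² to a neighborhood of `D⁺`
    (hu : ∃ U : Set (EuclideanSpace ℝ (Fin 2)), IsOpen U ∧
      {x : EuclideanSpace ℝ (Fin 2) | ‖x‖ < r ∧ 0 ≤ x 1} ⊆ U ∧ ContDiffOn ℝ 2 u U)
    (hv : ∃ U : Set (EuclideanSpace ℝ (Fin 2)), IsOpen U ∧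
      {x : EuclideanSpace ℝ (Fin 2) | ‖x‖ < r ∧ 0 ≤ x 1} ⊆ U ∧ ContDiffOn ℝ 2 v U)
    (huv : ∀ x : EuclideanSpace ℝ (Fin 2), ‖x‖ < r → 0 ≤ x 1 → v x ≤ u x)
    (htouch : u 0 = v 0)
    (hgrad : gradient u 0 = gradient v 0)
    (H₁ H₂ : ℝ) (hH : H₁ ≤ H₂)
    (hpdeu : ∀ x : EuclideanSpace ℝ (Fin 2), ‖x‖ < r → 0 < x 1 → cmcOp u x = 2 * H₁)
    (hpdev : ∀ x : EuclideanSpace ℝ (Fin 2), ‖x‖ < r → 0 < x 1 → cmcOp v x = 2 * H₂) :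
    ∃ ε > 0, Set.EqOn u v
      ({x : EuclideanSpace ℝ (Fin 2) | ‖x‖ < r ∧ 0 ≤ x 1} ∩ Metric.ball 0 ε) :=
  ⟨r, hr, (boundary_tangency_principle_general r hr u v hu hv (fun x hx ↦ huv x hx.1 hx.2.le) htouch
    (by rw [hgrad]) fun x hx ↦ by rw [hpdeu x hx.1 hx.2, hpdev x hx.1 hx.2]; gcongr).mono
    Set.inter_subset_left⟩
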